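/- For every τ in the upper half-plane with J(τ) ≠ 0 and J(τ) ≠ 1 (so that J'(τ) ≠ 0 and E4(τ) ≠ 0), the logarithmic derivative of E4 satisfies E4'(τ)/E4(τ) = 2 J''(τ)/J'(τ) − J'(τ)/J(τ) − J'(τ)/(J(τ) − 1). -/

import Mathlib

open Complex Filter Topology

noncomputable section

/-- The nome `q = e^{2πiτ}`. -/
def qq (τ : ℂ) : ℂ := Complex.exp (2 * Real.pi * Complex.I * τ)

/-- The Eisenstein series `E₄(τ) = 1 + 240 Σ_{n≥1} σ₃(n) qⁿ`. -/
def E4 (τ : ℂ) : ℂ := 1 + 240 * ∑' n : ℕ, (∑ d ∈ (n + 1).divisors, (d : ℂ) ^ 3) * qq τ ^ (n + 1)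

/-- The Eisenstein series `E₆(τ) = 1 − 504 Σ_{n≥1} σ₅(n) qⁿ`. -/
def E6 (τ : ℂ) : ℂ := 1 - 504 * ∑' n : ℕ, (∑ d ∈ (n + 1).divisors, (d : ℂ) ^ 5) * qq τ ^ (n + 1)

/-- The normalized elliptic modular function `J = E₄³ / (E₄³ − E₆²)`. -/
def J (τ : ℂ) : ℂ := E4 τ ^ 3 / (E4 τ ^ 3 - E6 τ ^ 2)

/-- The Dedekind eta function `η(τ) = e^{πiτ/12} ∏_{n≥1} (1 − qⁿ)`. -/
def dedekindEta (τ : ℂ) : ℂ := Complex.exp (Real.pi * Complex.I * τ / 12) * ∏' n : ℕ, (1 - qq τ ^ (n + 1))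

/-- The elliptic point `ρ = e^{2πi/3}`. -/
def rho : ℂ := Complex.exp (2 * Real.pi * Complex.I / 3)

/-!
The formula is the logarithmic derivative of the identity `J'² = (2πi)² · E₄ · J · (J - 1)` on the
upper half-plane. To prove this identity, note that the Serre derivative of `E₄` is a modular form
of weight 6 and level one, hence a multiple of `E₆`, namely `-E₆ / 3` by comparing constant terms.
Together with `(log η²⁴)' = 2πi E₂` and `E₄³ - E₆² = 1728 η²⁴` this gives
`J' = -2πi E₄² E₆ / (E₄³ - E₆²)`, since the quasimodular terms cancel in `J = E₄³ / (1728 η²⁴)`.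
-/

section

open UpperHalfPlane hiding I J
open Derivative ModularForm EisensteinSeries Function.Periodic
open scoped ArithmeticFunction.sigma Manifold MatrixGroups ModularForm Real

local notation "𝕢" => qParam

section QExpansion

variable {h : ℝ} {f : ℍ → ℂ}

lemma tendsto_atImInfty_of_hasSum_qParam {c : ℕ → ℂ} (hh : 0 < h)
    (hf : ∀ z : ℍ, HasSum (fun m ↦ c m • 𝕢 h z ^ m) (f z)) : Tendsto f atImInfty (𝓝 (c 0)) := by
  have hdom : ∀ᶠ z : ℍ in atImInfty, ∀ m,
      ‖c m • 𝕢 h z ^ m‖ ≤ ‖c m • 𝕢 h UpperHalfPlane.I ^ m‖ := by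
    filter_upwards [(atImInfty_mem {z | 1 ≤ z.im}).mpr ⟨1, fun _ hz ↦ hz⟩] with z hz m
    have hq : ‖𝕢 h z‖ ≤ ‖𝕢 h UpperHalfPlane.I‖ := by
      rw [norm_qParam, norm_qParam, Real.exp_le_exp, div_le_div_iff_of_pos_right hh]
      exact mul_le_mul_of_nonpos_left (by simpa using hz) (by linarith [Real.pi_pos])
    simp only [norm_smul, norm_pow]
    gcongr
  have hlim := tendsto_tsum_of_dominated_convergence (hf UpperHalfPlane.I).summable.norm
    (fun m ↦ ((qParam_tendsto_atImInfty hh).pow m).const_smul (c m)) hdom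
  rw [tsum_eq_single 0 (fun m hm ↦ by simp [hm]), pow_zero, smul_eq_mul, mul_one] at hlim
  exact hlim.congr fun z ↦ (hf z).tsum_eq

lemma normalizedDerivOfComplex_eq_qParam_mul_deriv_cuspFunction (hh : 0 < h)
    (hfper : Function.Periodic (f ∘ ofComplex) h) (hfhol : MDiff f) (hfbdd : IsBoundedAtImInfty f)
    (z : ℍ) : D f z = 𝕢 h z * deriv (cuspFunction h f) (𝕢 h z) / h := by
  have hq : HasDerivAt (𝕢 h) (𝕢 h z * (2 * π * I / h)) z := by
    simpa [qParam] using!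
      (((hasDerivAt_id (z : ℂ)).const_mul (2 * π * I)).div_const (h : ℂ)).cexp
  have hF := (differentiableAt_cuspFunction hh hfper hfhol hfbdd
    (norm_qParam_lt_one hh z.im_pos)).hasDerivAt
  have heq : f ∘ ofComplex =ᶠ[𝓝 (z : ℂ)] cuspFunction h f ∘ 𝕢 h := by
    filter_upwards with w
    exact (Function.Periodic.eq_cuspFunction hh.ne' hfper w).symm
  rw [normalizedDerivOfComplex, heq.deriv_eq, (hF.comp (z : ℂ) hq).deriv]
  field [Real.pi_ne_zero]

lemma isZeroAtImInfty_normalizedDerivOfComplex (hh : 0 < h)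
    (hfper : Function.Periodic (f ∘ ofComplex) h) (hfhol : MDiff f)
    (hfbdd : IsBoundedAtImInfty f) : IsZeroAtImInfty (D f) := by
  have hF' := (analyticAt_cuspFunction_zero hh hfper hfhol hfbdd).deriv.continuousAt.tendsto
  have hq := qParam_tendsto_atImInfty hh
  have hlim := (hq.mul (hF'.comp hq)).div_const (h : ℂ)
  rw [zero_mul, zero_div] at hlim
  exact hlim.congr fun z ↦
    (normalizedDerivOfComplex_eq_qParam_mul_deriv_cuspFunction hh hfper hfhol hfbdd z).symm

end QExpansion

section SerreDerivative

lemma tendsto_E2_atImInfty : Tendsto E2 atImInfty (𝓝 1) :=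
  tendsto_atImInfty_of_hasSum_qParam
    (c := fun m ↦ if m = 0 then 1 else -24 * σ 1 m) one_pos fun z ↦ by
      simpa only [qParam, ofReal_one, div_one] using hasSum_qExpansion_E2 (z := z)

lemma tendsto_serreDerivative_atImInfty {h : ℝ} {f : ℍ → ℂ} {a : ℂ} (k : ℂ) (hh : 0 < h)
    (hfper : Function.Periodic (f ∘ ofComplex) h) (hfhol : MDiff f)
    (hf : Tendsto f atImInfty (𝓝 a)) :
    Tendsto (serreDerivative k f) atImInfty (𝓝 (-(k / 12 * a))) := by
  have hD := isZeroAtImInfty_normalizedDerivOfComplex hh hfper hfhol (hf.isBigO_one ℝ)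
  have hE2f := (tendsto_E2_atImInfty.const_mul (k * 12⁻¹)).mul hf
  simpa [div_eq_mul_inv] using! hD.sub hE2f

lemma isBoundedAtImInfty_serreDerivative {h : ℝ} {f : ℍ → ℂ} (k : ℂ) (hh : 0 < h)
    (hfper : Function.Periodic (f ∘ ofComplex) h) (hfhol : MDiff f) (hfbdd : IsBoundedAtImInfty f) :
    IsBoundedAtImInfty (serreDerivative k f) := by
  have hD := (isZeroAtImInfty_normalizedDerivOfComplex hh hfper hfhol hfbdd).isBoundedAtImInfty
  have hE2f := ((const_boundedAtFilter atImInfty (k * 12⁻¹)).mul isBoundedAtImInfty_E2).mul hfbdd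
  exact hD.sub hE2f

/-- The Serre derivative `∂ₖ : Mₖ → Mₖ₊₂` on level one modular forms. -/
def serreDerivativeForm {k : ℤ} (f : ModularForm 𝒮ℒ k) : ModularForm 𝒮ℒ (k + 2) where
  toFun := serreDerivative k f
  slash_action_eq' := by
    rintro _ ⟨γ, rfl⟩
    exact serreDerivative_slash_invariant f.holo' (f.slash_action_eq' _ ⟨γ, rfl⟩)
  holo' := serreDerivative_mdifferentiable k f.holo'
  bdd_at_cusps' hc := by
    rw [Subgroup.IsArithmetic.isCusp_iff_isCusp_SL2Z] at hc
    rw [OnePoint.isBoundedAt_iff_forall_SL2Z hc]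
    intro γ _
    have hinv : serreDerivative k f ∣[k + 2] γ = serreDerivative k f :=
      serreDerivative_slash_invariant f.holo' (f.slash_action_eq' _ ⟨γ, rfl⟩)
    change IsBoundedAtImInfty (serreDerivative k f ∣[k + 2] γ)
    rw [hinv]
    exact isBoundedAtImInfty_serreDerivative k one_pos
      (SlashInvariantFormClass.periodic_comp_ofComplex f one_mem_strictPeriods_SL) f.holo'
      (ModularFormClass.bdd_at_infty f)

lemma tendsto_E_atImInfty {k : ℕ} (hk : 3 ≤ k) (hk2 : Even k) :
    Tendsto (E hk) atImInfty (𝓝 1) := by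
  rw [← E_qExpansion_coeff_zero hk hk2]
  exact tendsto_atImInfty_of_hasSum_qParam one_pos
    (ModularForm.hasSum_qExpansion (E hk) one_pos one_mem_strictPeriods_SL)

lemma serreDerivative_E₄ : serreDerivative 4 E₄ = (-1 / 3 : ℂ) • ⇑E₆ := by
  obtain ⟨c, hc⟩ : ∃ c : ℂ, c • E₆ = serreDerivativeForm E₄ :=
    (finrank_eq_one_iff_of_nonzero' E₆ (E_ne_zero _ ⟨3, rfl⟩)).mp
      (Module.rank_eq_one_iff_finrank_eq_one.mp levelOne_weight_six_rank_one) _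
  have hcE₆ : c • ⇑E₆ = serreDerivative 4 E₄ := congrArg DFunLike.coe hc
  have hlim := tendsto_serreDerivative_atImInfty 4 one_pos
    (SlashInvariantFormClass.periodic_comp_ofComplex E₄ one_mem_strictPeriods_SL) E₄.holo'
    (tendsto_E_atImInfty _ ⟨2, rfl⟩)
  have hc' : c = -1 / 3 := by
    have := tendsto_nhds_unique ((tendsto_E_atImInfty _ ⟨3, rfl⟩).const_smul c) (hcE₆ ▸ hlim)
    norm_num at this ⊢
    exact this
  rw [← hcE₆, hc']

end SerreDerivative

lemma hasDerivAt_eta_pow_twentyFour (z : ℍ) :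
    HasDerivAt (fun w ↦ η w ^ 24) (2 * π * I * E2 z * η z ^ 24) z := by
  have h := logDeriv_eta_eq_E2 z
  rw [logDeriv_apply, div_eq_iff (eta_ne_zero z.2)] at h
  convert! (differentiableAt_eta_of_mem_upperHalfPlaneSet z.2).hasDerivAt.pow 24 using 1
  rw [h]
  ring

lemma tsum_sum_divisors_pow_mul_qq_pow (k : ℕ) (z : ℍ) :
    ∑' n : ℕ, (∑ d ∈ (n + 1).divisors, (d : ℂ) ^ k) * qq z ^ (n + 1) =
      ∑' n : ℕ+, (σ k n : ℂ) * cexp (2 * π * I * z) ^ (n : ℤ) := by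
  simp_rw [zpow_natCast]
  rw [tsum_pnat_eq_tsum_succ
    (f := fun n ↦ (σ k n : ℂ) * cexp (2 * π * I * z) ^ n)]
  simp [ArithmeticFunction.sigma_apply, qq]

lemma E4_eq_E₄ (z : ℍ) : E4 z = E₄ z := by
  rw [q_expansion_bernoulli _ ⟨2, rfl⟩, E4, tsum_sum_divisors_pow_mul_qq_pow]
  norm_num [bernoulli, bernoulli'_four]

lemma E6_eq_E₆ (z : ℍ) : E6 z = E₆ z := by
  have hb : bernoulli 6 = 1 / 42 := by decide +kernel
  rw [q_expansion_bernoulli _ ⟨3, rfl⟩, E6, tsum_sum_divisors_pow_mul_qq_pow, hb]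
  norm_num

lemma E4_cube_sub_E6_sq_eq (z : ℍ) : E4 z ^ 3 - E6 z ^ 2 = 1728 * η z ^ 24 := by
  have h : η z ^ 24 = (E₄ z ^ 3 - E₆ z ^ 2) / 1728 := discriminant_eq_E₄_cube_sub_E₆_sq z
  rw [E4_eq_E₄, E6_eq_E₆, h]
  ring

lemma E4_cube_sub_E6_sq_ne_zero (z : ℍ) : E4 z ^ 3 - E6 z ^ 2 ≠ 0 := by
  simpa [E4_cube_sub_E6_sq_eq] using eta_ne_zero z.2

lemma hasDerivAt_E4 (z : ℍ) :
    HasDerivAt E4 (2 * π * I / 3 * (E2 z * E4 z - E6 z)) z := by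
  have heq : E4 =ᶠ[𝓝 (z : ℂ)] E₄ ∘ ofComplex := by
    filter_upwards [isOpen_upperHalfPlaneSet.mem_nhds z.im_pos] with w hw
    simpa [ofComplex_apply_of_im_pos hw] using E4_eq_E₄ ⟨w, hw⟩
  have hE₄ : HasDerivAt (E₄ ∘ ofComplex) (deriv (E₄ ∘ ofComplex) z) z :=
    (UpperHalfPlane.mdifferentiableAt_iff.mp (E₄.holo' z)).hasDerivAt
  have hS := congrFun serreDerivative_E₄ z
  convert! hE₄.congr_of_eventuallyEq heq using 1
  simp only [serreDerivative_apply, normalizedDerivOfComplex, Pi.smul_apply, smul_eq_mul,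
    ← E4_eq_E₄, ← E6_eq_E₆] at hS
  field_simp at hS ⊢
  linear_combination -hS / 12

lemma hasDerivAt_J (z : ℍ) :
    HasDerivAt J (-2 * π * I * E4 z ^ 2 * E6 z / (E4 z ^ 3 - E6 z ^ 2)) z := by
  have heq : J =ᶠ[𝓝 (z : ℂ)] fun w ↦ E4 w ^ 3 / (1728 * η w ^ 24) := by
    filter_upwards [isOpen_upperHalfPlaneSet.mem_nhds z.im_pos] with w hw
    rw [J, E4_cube_sub_E6_sq_eq ⟨w, hw⟩]
  have hη := eta_ne_zero z.2
  convert! (((hasDerivAt_E4 z).pow 3).div ((hasDerivAt_eta_pow_twentyFour z).const_mul 1728)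
    (by simpa using hη)).congr_of_eventuallyEq heq using 1
  rw [E4_cube_sub_E6_sq_eq, Pi.pow_apply]
  push_cast
  field

lemma J_sub_one (z : ℍ) : J z - 1 = E6 z ^ 2 / (E4 z ^ 3 - E6 z ^ 2) := by
  rw [J, div_sub_one (E4_cube_sub_E6_sq_ne_zero z), sub_sub_cancel]

lemma deriv_J_sq (z : ℍ) :
    deriv J z ^ 2 = (2 * π * I) ^ 2 * E4 z * (J z * (J z - 1)) := by
  have hD := E4_cube_sub_E6_sq_ne_zero z
  rw [(hasDerivAt_J z).deriv, J_sub_one, J]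
  field

lemma differentiableOn_J : DifferentiableOn ℂ J upperHalfPlaneSet :=
  fun w hw ↦ (hasDerivAt_J ⟨w, hw⟩).differentiableAt.differentiableWithinAt

end

lemma logDeriv_eq_of_eventually_deriv_sq_eq {𝕜 : Type*} [NontriviallyNormedField 𝕜]
    {f g : 𝕜 → 𝕜} {a b c z : 𝕜}
    (hf' : DifferentiableAt 𝕜 (deriv f) z) (hg : DifferentiableAt 𝕜 g z) (hz : deriv f z ≠ 0)
    (h : ∀ᶠ w in 𝓝 z, deriv f w ^ 2 = c * g w * ((f w - a) * (f w - b))) :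
    logDeriv g z = 2 * logDeriv (deriv f) z - deriv f z / (f z - a) - deriv f z / (f z - b) := by
  have hne : c * g z * ((f z - a) * (f z - b)) ≠ 0 := h.self_of_nhds ▸ pow_ne_zero 2 hz
  simp only [mul_ne_zero_iff] at hne
  obtain ⟨⟨hc, hgz⟩, haz, hbz⟩ := hne
  have hf := differentiableAt_of_deriv_ne_zero hz
  have hfa := hf.sub_const a
  have hfb := hf.sub_const b
  have hquad : logDeriv (fun w ↦ (f w - a) * (f w - b)) z =
      deriv f z / (f z - a) + deriv f z / (f z - b) := by
    rw [logDeriv_mul z haz hbz hfa hfb]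
    simp only [logDeriv_apply, deriv_sub_const]
  have hlog := (logDeriv_congr_nhds h).eq_of_nhds
  rw [logDeriv_fun_pow hf', logDeriv_mul (f := fun w ↦ c * g w)
    (g := fun w ↦ (f w - a) * (f w - b)) z (mul_ne_zero hc hgz) (mul_ne_zero haz hbz)
    (hg.const_mul c) (hfa.mul hfb), logDeriv_const_mul z c hc, hquad] at hlog
  push_cast at hlog
  linear_combination -hlog

/-- For `τ ∈ ℍ` with `J(τ) ∉ {0,1}`, `J'(τ) ≠ 0`, `E₄(τ) ≠ 0` and
`E₄'/E₄ = 2 J''/J' − J'/J − J'/(J−1)`. -/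
theorem E4_log_deriv_formula (τ : ℂ) (hτ : 0 < τ.im) (h0 : J τ ≠ 0) (h1 : J τ ≠ 1) :
    deriv J τ ≠ 0 ∧ E4 τ ≠ 0 ∧
    deriv E4 τ / E4 τ =
      2 * (iteratedDeriv 2 J τ / deriv J τ) - deriv J τ / J τ -
        deriv J τ / (J τ - 1) := by
  have hℍ : ∀ᶠ w in 𝓝 τ, 0 < w.im := UpperHalfPlane.isOpen_upperHalfPlaneSet.mem_nhds hτ
  have hsq : ∀ᶠ w in 𝓝 τ,
      deriv J w ^ 2 = (2 * Real.pi * I) ^ 2 * E4 w * ((J w - 0) * (J w - 1)) :=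
    hℍ.mono fun w hw ↦ by simpa using deriv_J_sq ⟨w, hw⟩
  have hE4 : E4 τ ≠ 0 := fun h ↦ h0 (by simp [J, h])
  have hJ' : deriv J τ ≠ 0 := by
    rw [← sq_eq_zero_iff.ne, hsq.self_of_nhds]
    simp [hE4, h0, sub_ne_zero.mpr h1, Real.pi_ne_zero]
  refine ⟨hJ', hE4, ?_⟩
  have hlog := logDeriv_eq_of_eventually_deriv_sq_eq
    ((differentiableOn_J.deriv UpperHalfPlane.isOpen_upperHalfPlaneSet).differentiableAt hℍ)
    (hasDerivAt_E4 ⟨τ, hτ⟩).differentiableAt hJ' hsq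
  simpa [logDeriv_apply, iteratedDeriv_succ, iteratedDeriv_one] using hlog
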